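/- arXiv:math/0403510 — 4 statements merged into one kernel-verified Lean document; each statement's English description precedes it below -/
import Mathlib

section
/- The real Gamma function satisfies Γ(1/6) = (√3 / (√π · 2^(1/3))) · Γ(1/3)². -/
open Real

/-!
Legendre duplication relates `Γ(s)`, `Γ(s + 1/2)` and `Γ(2s)`, and reflection about `1/2` trades
`Γ(1/2 + s)` for `Γ(1/2 - s)`. At `s = 1/6` the two remaining arguments `2s` and `1/2 - s` coincide,
which is why `Γ(1/3)` appears squared.
-/

theorem Gamma_half_add_mul_Gamma_half_sub (s : ℝ) :
    Gamma (1 / 2 + s) * Gamma (1 / 2 - s) = π / cos (π * s) := by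
  have reflection := Real.Gamma_mul_Gamma_one_sub (1 / 2 + s)
  rwa [show 1 - (1 / 2 + s) = 1 / 2 - s by ring,
    show π * (1 / 2 + s) = π * s + π / 2 by ring, sin_add_pi_div_two] at reflection

theorem Gamma_eq_Gamma_two_mul_mul_Gamma_half_sub {s : ℝ} (hs : cos (π * s) ≠ 0) :
    Gamma s =
      2 ^ (1 - 2 * s) * cos (π * s) / √π * (Gamma (2 * s) * Gamma (1 / 2 - s)) := by
  have reflection := Gamma_half_add_mul_Gamma_half_sub s
  have hGamma : Gamma (1 / 2 + s) ≠ 0 :=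
    left_ne_zero_of_mul (reflection ▸ div_ne_zero pi_ne_zero hs)
  refine mul_right_cancel₀ hGamma ?_
  calc
    Gamma s * Gamma (1 / 2 + s) = Gamma (2 * s) * 2 ^ (1 - 2 * s) * √π := by
      rw [add_comm, Real.Gamma_mul_Gamma_add_half]
    _ = Gamma (2 * s) * 2 ^ (1 - 2 * s) * (π / √π) := by
      rw [div_sqrt]
    _ = Gamma (2 * s) * 2 ^ (1 - 2 * s) *
        (Gamma (1 / 2 + s) * Gamma (1 / 2 - s) * cos (π * s) / √π) := by
      rw [reflection, div_mul_cancel₀ _ hs]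
    _ = 2 ^ (1 - 2 * s) * cos (π * s) / √π * (Gamma (2 * s) * Gamma (1 / 2 - s)) *
        Gamma (1 / 2 + s) := by
      ring

theorem gamma_one_sixth :
    Real.Gamma (1/6) =
      (Real.sqrt 3 / (Real.sqrt π * (2:ℝ) ^ ((1:ℝ)/3))) * Real.Gamma (1/3) ^ 2 := by
  have hcos : cos (π * (1 / 6)) = √3 / 2 := by
    rw [mul_one_div, cos_pi_div_six]
  have hpow : (2 : ℝ) ^ (1 - 1 / 3 : ℝ) = 2 / 2 ^ (1 / 3 : ℝ) := by
    rw [rpow_sub two_pos, rpow_one]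
  calc
    Gamma (1 / 6) = 2 ^ (1 - 2 * (1 / 6) : ℝ) * cos (π * (1 / 6)) / √π *
        (Gamma (2 * (1 / 6)) * Gamma (1 / 2 - 1 / 6)) :=
      Gamma_eq_Gamma_two_mul_mul_Gamma_half_sub (by rw [hcos]; positivity)
    _ = 2 / 2 ^ (1 / 3 : ℝ) * (√3 / 2) / √π * (Gamma (1 / 3) * Gamma (1 / 3)) := by
      rw [hcos, show 2 * (1 / 6 : ℝ) = 1 / 3 by norm_num,
        show (1 / 2 - 1 / 6 : ℝ) = 1 / 3 by norm_num, hpow]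
    _ = √3 / (√π * 2 ^ (1 / 3 : ℝ)) * Gamma (1 / 3) ^ 2 := by
      field_simp
end

section
/- The real Gamma function satisfies Γ(1/10) = (√φ / (√π · 2^(7/10))) · Γ(1/5) · Γ(2/5), where φ = 5 + √5. -/
/-!
Legendre duplication expresses `Γ(s) Γ(s + 1/2)` through `Γ(2s)`, and Euler reflection about `1/2`
trades `Γ(s + 1/2)` for `π / (cos (π s) Γ(1/2 - s))`. At `s = 1/10` the arguments `2s` and
`1/2 - s` are `1/5` and `2/5`, and `cos (π / 10)` is a half-angle of `cos (π / 5) = (1 + √5) / 4`.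
-/

open Real

theorem Gamma_add_half_mul_Gamma_half_sub (s : ℝ) :
    Gamma (s + 1 / 2) * Gamma (1 / 2 - s) = π / cos (π * s) := by
  have reflection := Gamma_mul_Gamma_one_sub (s + 1 / 2)
  rwa [show 1 - (s + 1 / 2) = 1 / 2 - s by ring, mul_add, mul_one_div, sin_add_pi_div_two]
    at reflection

theorem Gamma_eq_cos_mul_Gamma_two_mul_mul_Gamma_half_sub {s : ℝ} (hs : cos (π * s) ≠ 0) :
    Gamma s = 2 ^ (1 - 2 * s) * cos (π * s) / √π * Gamma (2 * s) * Gamma (1 / 2 - s) := by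
  have reflection := Gamma_add_half_mul_Gamma_half_sub s
  have h_ne : Gamma (s + 1 / 2) ≠ 0 :=
    left_ne_zero_of_mul (reflection ▸ div_ne_zero pi_ne_zero hs)
  apply mul_right_cancel₀ h_ne
  calc Gamma s * Gamma (s + 1 / 2)
      = Gamma (2 * s) * 2 ^ (1 - 2 * s) * √π := Gamma_mul_Gamma_add_half s
    _ = 2 ^ (1 - 2 * s) / √π * Gamma (2 * s) * (cos (π * s) * (π / cos (π * s))) := by
      rw [mul_div_cancel₀ _ hs]
      field_simp
      rw [sq_sqrt pi_pos.le]
    _ = 2 ^ (1 - 2 * s) * cos (π * s) / √π * Gamma (2 * s) * Gamma (1 / 2 - s) *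
          Gamma (s + 1 / 2) := by
      rw [← reflection]
      ring

theorem cos_pi_div_ten : cos (π / 10) = √(5 + √5) / (2 * √2) := by
  have h_pos : 0 < cos (π / 10) :=
    cos_pos_of_mem_Ioo ⟨by linarith [pi_pos], by linarith [pi_pos]⟩
  rw [← sq_eq_sq₀ h_pos.le (by positivity), cos_sq, show 2 * (π / 10) = π / 5 by ring,
    cos_pi_div_five, div_pow, mul_pow, sq_sqrt (by positivity), sq_sqrt (by positivity)]
  ring

theorem gamma_one_tenth :
    Real.Gamma (1/10) =
      (Real.sqrt (5 + Real.sqrt 5) / (Real.sqrt π * (2:ℝ) ^ ((7:ℝ)/10))) *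
        Real.Gamma (1/5) * Real.Gamma (2/5) := by
  have h_cos : cos (π * (1 / 10)) = √(5 + √5) / (2 * √2) := by
    rw [mul_one_div, cos_pi_div_ten]
  have h_ne : cos (π * (1 / 10)) ≠ 0 := by
    rw [h_cos]
    positivity
  have h_two : (2 : ℝ) ^ (4 / 5 : ℝ) * 2 ^ (7 / 10 : ℝ) = 2 * √2 := by
    rw [← rpow_add two_pos, sqrt_eq_rpow, ← rpow_one_add' two_pos.le (by norm_num)]
    norm_num
  calc Gamma (1 / 10)
      = 2 ^ (4 / 5 : ℝ) * (√(5 + √5) / (2 * √2)) / √π * Gamma (1 / 5) * Gamma (2 / 5) := by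
        convert Gamma_eq_cos_mul_Gamma_two_mul_mul_Gamma_half_sub h_ne using 5 <;> norm_num [h_cos]
    _ = √(5 + √5) / (√π * 2 ^ (7 / 10 : ℝ)) * Gamma (1 / 5) * Gamma (2 / 5) := by
        rw [← h_two]
        field_simp
end

section
/- The real Gamma function satisfies Γ(1/12) = (3^(3/8) · √(√3 + 1) / (√π · 2^(1/4))) · Γ(1/3) · Γ(1/4). -/
open Real

/-!
For every `n ≥ 1`, the product `∏ k < n, Γ((s + k) / n)`, multiplied by `n ^ s` and normalised at
`s = 1`, is log-convex and satisfies the functional equation of `Γ`, so it is `Γ` by Bohr–Mollerup;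
the constant comes from reflection and `∏ 0 < k < n, 2 sin (π k / n) = n`. This is Gauss's
multiplication formula.

The multiplication formula for `n = 3` and reflection give the product `Γ(1/12) Γ(5/12)`, while
duplication and reflection at `1/12` and `1/6` give the quotient `Γ(1/12) / Γ(5/12)`. Multiplying
the two gives `Γ(1/12) ^ 2`.
-/

section ProdSin

theorem two_mul_sin_pi_mul_div_pos {n k : ℕ} (hk : k < n) :
    0 < 2 * sin (π * ((k + 1) / (n + 1))) := by
  have hlt : ((k : ℝ) + 1) / (n + 1) < 1 := by
    rw [div_lt_one (by positivity)]
    exact_mod_cast Nat.succ_lt_succ hk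
  exact mul_pos two_pos
    (sin_pos_of_pos_of_lt_pi (by positivity) (mul_lt_of_lt_one_right pi_pos hlt))

theorem prod_two_mul_sin_pi_mul_div (n : ℕ) :
    ∏ k ∈ Finset.range n, 2 * sin (π * ((k + 1) / (n + 1))) = n + 1 := by
  let ζ := Complex.exp (2 * π * Complex.I / (n + 1 : ℕ))
  have hζ : IsPrimitiveRoot ζ (n + 1) := Complex.isPrimitiveRoot_exp _ n.succ_ne_zero
  have norm_sub_one (k : ℕ) (hk : k ∈ Finset.range n) :
      ‖ζ ^ (k + 1) - 1‖ = 2 * sin (π * ((k + 1) / (n + 1))) := by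
    have hpow : ζ ^ (k + 1) =
        Complex.exp (Complex.I * (2 * (π * ((k + 1) / (n + 1))) : ℝ)) := by
      rw [← Complex.exp_nat_mul]
      push_cast
      ring_nf
    rw [hpow, Complex.norm_exp_I_mul_ofReal_sub_one, mul_div_cancel_left₀ _ two_ne_zero,
      Real.norm_of_nonneg (two_mul_sin_pi_mul_div_pos (Finset.mem_range.1 hk)).le]
  calc ∏ k ∈ Finset.range n, 2 * sin (π * ((k + 1) / (n + 1)))
      = ‖(-1) ^ n * ∏ k ∈ Finset.range n, (ζ ^ (k + 1) - 1)‖ := by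
        rw [norm_mul, norm_pow, norm_neg, norm_one, one_pow, one_mul, norm_prod,
          Finset.prod_congr rfl norm_sub_one]
    _ = n + 1 := by
        rw [hζ.prod_pow_sub_one_eq_order]
        exact_mod_cast Complex.norm_natCast (n + 1)

end ProdSin

section Multiplication

theorem convexOn_finset_sum {𝕜 E β ι : Type*} [Semiring 𝕜] [PartialOrder 𝕜] [AddCommMonoid E]
    [SMul 𝕜 E] [AddCommMonoid β] [PartialOrder β] [IsOrderedAddMonoid β] [Module 𝕜 β] {s : Set E}
    (hs : Convex 𝕜 s) {t : Finset ι} {f : ι → E → β} (hf : ∀ i ∈ t, ConvexOn 𝕜 s (f i)) :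
    ConvexOn 𝕜 s (∑ i ∈ t, f i) :=
  Finset.sum_induction f (ConvexOn 𝕜 s) (fun _ _ ↦ ConvexOn.add) (convexOn_const 0 hs) hf

theorem convexOn_log_Gamma_add_div {a c : ℝ} (ha : 0 < a) (hc : 0 ≤ c) :
    ConvexOn ℝ (Set.Ioi 0) fun s ↦ log (Gamma ((s + c) / a)) := by
  let g : ℝ →ᵃ[ℝ] ℝ := a⁻¹ • (AffineMap.id ℝ ℝ + AffineMap.const ℝ ℝ c)
  have hg (s : ℝ) : g s = (s + c) / a := inv_mul_eq_div a (s + c)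
  refine ((convexOn_log_Gamma.comp_affineMap g).subset (fun s hs ↦ ?_) (convex_Ioi 0)).congr
    fun s _ ↦ by simp only [Function.comp_apply, hg]
  rw [Set.mem_preimage, hg]
  exact div_pos (add_pos_of_pos_of_nonneg hs hc) ha

/-- The function which Gauss's multiplication formula identifies with `Γ` on the positive reals:
the product of the `Γ((s + k) / n)` for `k < n`, scaled so that it satisfies the functional
equation of `Γ` and takes the value `1` at `1`. -/
noncomputable def gaussGamma (n : ℕ) (s : ℝ) : ℝ :=
  n ^ (s - 1) * ∏ k ∈ Finset.range n, Gamma ((s + k) / n) / Gamma ((1 + k) / n)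

variable {n : ℕ} {s : ℝ}

theorem Gamma_add_natCast_div_pos (hn : 0 < n) (hs : 0 < s) (k : ℕ) : 0 < Gamma ((s + k) / n) :=
  Gamma_pos_of_pos (by positivity)

theorem gaussGamma_pos (hn : 0 < n) (hs : 0 < s) : 0 < gaussGamma n s :=
  mul_pos (by positivity) <| Finset.prod_pos fun k _ ↦
    div_pos (Gamma_add_natCast_div_pos hn hs k) (Gamma_add_natCast_div_pos hn one_pos k)

theorem gaussGamma_one (hn : 0 < n) : gaussGamma n 1 = 1 := by
  have hprod : ∏ k ∈ Finset.range n, Gamma ((1 + k) / n) / Gamma ((1 + k) / n) = 1 :=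
    Finset.prod_eq_one fun k _ ↦ div_self (Gamma_add_natCast_div_pos hn one_pos k).ne'
  rw [gaussGamma, hprod, sub_self, rpow_zero, mul_one]

theorem prod_Gamma_add_one_add_div (hn : 0 < n) (hs : 0 < s) :
    ∏ k ∈ Finset.range n, Gamma ((s + 1 + k) / n) =
      s / n * ∏ k ∈ Finset.range n, Gamma ((s + k) / n) := by
  have hn' : (n : ℝ) ≠ 0 := by positivity
  have hlast : Gamma ((s + n) / n) = s / n * Gamma (s / n) := by
    rw [add_div, div_self hn', Gamma_add_one (by positivity)]
  have hΓ : Gamma (s / n) ≠ 0 := (Gamma_pos_of_pos (by positivity)).ne'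
  refine mul_right_cancel₀ hΓ ?_
  calc (∏ k ∈ Finset.range n, Gamma ((s + 1 + k) / n)) * Gamma (s / n)
      = ∏ k ∈ Finset.range (n + 1), Gamma ((s + k) / n) := by
        simp only [Finset.prod_range_succ', Nat.cast_add_one, Nat.cast_zero, add_zero,
          add_assoc, add_comm (1 : ℝ)]
    _ = s / n * (∏ k ∈ Finset.range n, Gamma ((s + k) / n)) * Gamma (s / n) := by
        rw [Finset.prod_range_succ, hlast]
        ring

theorem gaussGamma_add_one (hn : 0 < n) (hs : 0 < s) :
    gaussGamma n (s + 1) = s * gaussGamma n s := by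
  have hn' : (n : ℝ) ≠ 0 := by positivity
  rw [gaussGamma, gaussGamma, Finset.prod_div_distrib, Finset.prod_div_distrib,
    prod_Gamma_add_one_add_div hn hs, add_sub_right_comm, rpow_add_one hn']
  field_simp

theorem log_gaussGamma (hn : 0 < n) (hs : 0 < s) :
    log (gaussGamma n s) = (s - 1) * log n +
      ∑ k ∈ Finset.range n, (log (Gamma ((s + k) / n)) - log (Gamma ((1 + k) / n))) := by
  have hΓ := Gamma_add_natCast_div_pos hn hs
  have hΓ₁ := Gamma_add_natCast_div_pos hn one_pos
  have hquot (k : ℕ) : Gamma ((s + k) / n) / Gamma ((1 + k) / n) ≠ 0 :=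
    (div_pos (hΓ k) (hΓ₁ k)).ne'
  rw [gaussGamma, log_mul (by positivity) (Finset.prod_ne_zero_iff.2 fun k _ ↦ hquot k),
    log_rpow (by positivity), log_prod fun k _ ↦ hquot k]
  simp only [log_div (hΓ _).ne' (hΓ₁ _).ne']

theorem convexOn_log_gaussGamma (hn : 0 < n) :
    ConvexOn ℝ (Set.Ioi 0) (log ∘ gaussGamma n) := by
  have hpow : ConvexOn ℝ (Set.Ioi 0) fun s : ℝ ↦ (s - 1) * log n :=
    (((convexOn_id (convex_Ioi 0)).smul (log_natCast_nonneg n)).add_const (-log n)).congr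
      fun s _ ↦ by simp only [Pi.add_apply, smul_eq_mul, id]; ring
  have hΓ (k : ℕ) (_ : k ∈ Finset.range n) : ConvexOn ℝ (Set.Ioi 0)
      fun s : ℝ ↦ log (Gamma ((s + k) / n)) - log (Gamma ((1 + k) / n)) :=
    (convexOn_log_Gamma_add_div (Nat.cast_pos.2 hn) k.cast_nonneg).add_const _
  refine (hpow.add (convexOn_finset_sum (convex_Ioi 0) hΓ)).congr fun s hs ↦ ?_
  simp only [Pi.add_apply, Finset.sum_apply, Function.comp_apply, log_gaussGamma hn hs]

theorem gaussGamma_eq_Gamma (hn : 0 < n) (hs : 0 < s) : gaussGamma n s = Gamma s :=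
  eq_Gamma_of_log_convex (convexOn_log_gaussGamma hn) (gaussGamma_add_one hn) (gaussGamma_pos hn)
    (gaussGamma_one hn) hs

theorem sq_prod_Gamma_add_one_div_add_one (n : ℕ) :
    (∏ k ∈ Finset.range n, Gamma ((k + 1) / (n + 1))) ^ 2 = (2 * π) ^ n / (n + 1) := by
  have hreflect : ∏ k ∈ Finset.range n, Gamma (1 - (k + 1) / (n + 1)) =
      ∏ k ∈ Finset.range n, Gamma ((k + 1) / (n + 1)) := by
    rw [← Finset.prod_range_reflect (fun k ↦ Gamma (((k : ℝ) + 1) / (n + 1)))]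
    refine Finset.prod_congr rfl fun k hk ↦ congrArg Gamma ?_
    have hcast : ((n - 1 - k : ℕ) : ℝ) + 1 = n - k := by
      rw [← Nat.cast_sub (Finset.mem_range.1 hk).le, ← Nat.cast_add_one]
      congr 1
      have := Finset.mem_range.1 hk
      lia
    rw [hcast]
    field
  have hpair (k : ℕ) : Gamma ((k + 1) / (n + 1)) * Gamma (1 - (k + 1) / (n + 1)) =
      2 * π / (2 * sin (π * ((k + 1) / (n + 1)))) := by
    rw [Gamma_mul_Gamma_one_sub, mul_div_mul_left _ _ two_ne_zero]
  rw [sq]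
  nth_rw 2 [← hreflect]
  rw [← Finset.prod_mul_distrib, Finset.prod_congr rfl fun k _ ↦ hpair k,
    Finset.prod_div_distrib, prod_two_mul_sin_pi_mul_div, Finset.prod_const, Finset.card_range]

theorem prod_Gamma_one_add_div (hn : 0 < n) :
    ∏ k ∈ Finset.range n, Gamma ((1 + k) / n) = (2 * π) ^ (((n : ℝ) - 1) / 2) / √n := by
  obtain ⟨m, rfl⟩ := Nat.exists_eq_add_one.2 hn
  have hpos : 0 ≤ ∏ k ∈ Finset.range m, Gamma (((k : ℝ) + 1) / (m + 1)) :=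
    Finset.prod_nonneg fun k _ ↦ (Gamma_pos_of_pos (by positivity)).le
  have hsqrt : √((2 * π) ^ m) = (2 * π) ^ ((m : ℝ) / 2) := by
    rw [sqrt_eq_rpow, ← rpow_natCast_mul (by positivity), mul_one_div]
  have hm : (m : ℝ) + 1 ≠ 0 := by positivity
  rw [Nat.cast_add_one, add_sub_cancel_right, ← hsqrt, ← sqrt_div' _ (by positivity),
    ← sq_prod_Gamma_add_one_div_add_one, sqrt_sq hpos, Finset.prod_range_succ, add_comm 1 (m : ℝ),
    div_self hm, Gamma_one, mul_one]
  simp only [add_comm (1 : ℝ)]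

theorem prod_Gamma_add_div (hn : 0 < n) (hs : 0 < s) :
    ∏ k ∈ Finset.range n, Gamma (s + k / n) =
      (2 * π) ^ (((n : ℝ) - 1) / 2) * (n : ℝ) ^ (1 / 2 - n * s) * Gamma (n * s) := by
  have hn' : (0 : ℝ) < n := Nat.cast_pos.2 hn
  have hprod : ∏ k ∈ Finset.range n, Gamma ((n * s + k) / n) =
      ∏ k ∈ Finset.range n, Gamma (s + k / n) := by
    simp only [add_div, mul_div_cancel_left₀ _ hn'.ne']
  have hpow : (n : ℝ) ^ (1 / 2 - n * s) * n ^ (n * s - 1) = (√n)⁻¹ := by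
    rw [← rpow_add hn', sqrt_eq_rpow, ← rpow_neg hn'.le]
    ring_nf
  rw [← gaussGamma_eq_Gamma hn (mul_pos hn' hs), gaussGamma, Finset.prod_div_distrib, hprod,
    prod_Gamma_one_add_div hn, ← mul_assoc, mul_assoc _ (_ ^ _) (_ ^ _), hpow]
  field_simp

end Multiplication

section SpecialValues

theorem Gamma_mul_sqrt_pi {s : ℝ} (hs : cos (π * s) ≠ 0) :
    Gamma s * √π = 2 ^ (1 - 2 * s) * cos (π * s) * Gamma (2 * s) * Gamma (1 / 2 - s) := by
  have hreflect : Gamma (s + 1 / 2) * Gamma (1 / 2 - s) * cos (π * s) = π := by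
    rw [show 1 / 2 - s = 1 - (s + 1 / 2) by ring, Gamma_mul_Gamma_one_sub, mul_add, mul_one_div,
      sin_add_pi_div_two, div_mul_cancel₀ _ hs]
  have hΓ : Gamma (s + 1 / 2) ≠ 0 := fun h ↦
    pi_ne_zero (by rw [← hreflect, h, zero_mul, zero_mul])
  have hπ : √π * √π = π := mul_self_sqrt pi_pos.le
  refine mul_left_cancel₀ hΓ ?_
  linear_combination √π * Gamma_mul_Gamma_add_half s -
    Gamma (2 * s) * 2 ^ (1 - 2 * s) * (hreflect - hπ)

theorem cos_pi_div_twelve : cos (π / 12) = √2 * (√3 + 1) / 4 := by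
  rw [show π / 12 = π / 3 - π / 4 by ring, cos_sub, cos_pi_div_three, cos_pi_div_four,
    sin_pi_div_three, sin_pi_div_four]
  ring

theorem Gamma_one_sixth_mul_sqrt_pi :
    Gamma (1 / 6) * √π = 2 ^ (-1 / 3 : ℝ) * √3 * Gamma (1 / 3) ^ 2 := by
  have hcos : cos (π * (1 / 6)) = √3 / 2 := by rw [mul_one_div, cos_pi_div_six]
  have hpow : (2 : ℝ) ^ (2 / 3 : ℝ) = 2 ^ (-1 / 3 : ℝ) * 2 := by
    rw [← rpow_add_one two_ne_zero]
    norm_num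
  have h := Gamma_mul_sqrt_pi (s := 1 / 6) (by rw [hcos]; positivity)
  norm_num only [hcos] at h
  rw [h, hpow]
  ring

theorem Gamma_one_twelfth_mul_sqrt_pi :
    Gamma (1 / 12) * √π =
      2 ^ (-2 / 3 : ℝ) * (√3 + 1) * Gamma (1 / 6) * Gamma (5 / 12) := by
  have hcos : cos (π * (1 / 12)) = √2 * (√3 + 1) / 4 := by rw [mul_one_div, cos_pi_div_twelve]
  have hpow : (2 : ℝ) ^ (5 / 6 : ℝ) * √2 = 2 ^ (-2 / 3 : ℝ) * 4 := by
    rw [sqrt_eq_rpow, ← rpow_add two_pos, show (4 : ℝ) = 2 ^ (2 : ℝ) by norm_num,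
      ← rpow_add two_pos]
    norm_num
  have h := Gamma_mul_sqrt_pi (s := 1 / 12) (by rw [hcos]; positivity)
  norm_num only [hcos] at h
  linear_combination h + (√3 + 1) / 4 * Gamma (1 / 6) * Gamma (5 / 12) * hpow

theorem Gamma_one_twelfth_mul_Gamma_five_twelfths :
    Gamma (1 / 12) * Gamma (5 / 12) = √2 * 3 ^ (1 / 4 : ℝ) * Gamma (1 / 4) ^ 2 := by
  have htriple : Gamma (1 / 12) * Gamma (5 / 12) * Gamma (3 / 4) =
      2 * π * 3 ^ (1 / 4 : ℝ) * Gamma (1 / 4) := by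
    convert prod_Gamma_add_div (n := 3) (s := 1 / 12) three_pos (by norm_num) using 1 <;>
      norm_num [Finset.prod_range_succ]
  have hreflect : Gamma (1 / 4) * Gamma (3 / 4) = √2 * π := by
    rw [show (3 / 4 : ℝ) = 1 - 1 / 4 by norm_num, Gamma_mul_Gamma_one_sub, mul_one_div,
      sin_pi_div_four]
    field_simp
    rw [sq_sqrt zero_le_two]
  have hΓ : Gamma (3 / 4) ≠ 0 := (Gamma_pos_of_pos (by norm_num)).ne'
  refine mul_right_cancel₀ hΓ ?_
  have h2 : √2 * √2 = 2 := mul_self_sqrt zero_le_two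
  linear_combination htriple - √2 * 3 ^ (1 / 4 : ℝ) * Gamma (1 / 4) * hreflect -
    π * 3 ^ (1 / 4 : ℝ) * Gamma (1 / 4) * h2

theorem sq_Gamma_one_twelfth :
    Gamma (1 / 12) ^ 2 =
      3 ^ (3 / 4 : ℝ) * (√3 + 1) / (π * √2) * Gamma (1 / 3) ^ 2 * Gamma (1 / 4) ^ 2 := by
  have h2 : (2 : ℝ) ^ (-2 / 3 : ℝ) * 2 ^ (-1 / 3 : ℝ) * √2 = (√2)⁻¹ := by
    rw [sqrt_eq_rpow, ← rpow_add two_pos, ← rpow_add two_pos, ← rpow_neg zero_le_two]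
    norm_num
  have h3 : √3 * 3 ^ (1 / 4 : ℝ) = 3 ^ (3 / 4 : ℝ) := by
    rw [sqrt_eq_rpow, ← rpow_add three_pos]
    norm_num
  refine mul_right_cancel₀ pi_ne_zero ?_
  calc Gamma (1 / 12) ^ 2 * π
      = Gamma (1 / 12) * √π * (Gamma (1 / 12) * √π) := by
        nth_rw 1 [← sq_sqrt pi_pos.le]
        ring
    _ = 2 ^ (-2 / 3 : ℝ) * (√3 + 1) * (Gamma (1 / 6) * √π) *
          (Gamma (1 / 12) * Gamma (5 / 12)) := by
        nth_rw 1 [Gamma_one_twelfth_mul_sqrt_pi]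
        ring
    _ = 2 ^ (-2 / 3 : ℝ) * 2 ^ (-1 / 3 : ℝ) * √2 * (√3 * 3 ^ (1 / 4 : ℝ)) * (√3 + 1) *
          Gamma (1 / 3) ^ 2 * Gamma (1 / 4) ^ 2 := by
        rw [Gamma_one_sixth_mul_sqrt_pi, Gamma_one_twelfth_mul_Gamma_five_twelfths]
        ring
    _ = 3 ^ (3 / 4 : ℝ) * (√3 + 1) / (π * √2) * Gamma (1 / 3) ^ 2 * Gamma (1 / 4) ^ 2 * π := by
        rw [h2, h3]
        field

end SpecialValues

theorem gamma_one_twelfth :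
    Real.Gamma (1/12) =
      ((3:ℝ) ^ ((3:ℝ)/8) * Real.sqrt (Real.sqrt 3 + 1) / (Real.sqrt π * (2:ℝ) ^ ((1:ℝ)/4))) *
        Real.Gamma (1/3) * Real.Gamma (1/4) := by
  have hΓ {s : ℝ} (hs : 0 < s) : 0 < Gamma s := Gamma_pos_of_pos hs
  have h3 : ((3 : ℝ) ^ (3 / 8 : ℝ)) ^ 2 = 3 ^ (3 / 4 : ℝ) := by
    rw [← rpow_mul_natCast zero_le_three]
    norm_num
  have h2 : ((2 : ℝ) ^ (1 / 4 : ℝ)) ^ 2 = √2 := by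
    rw [← rpow_mul_natCast zero_le_two, sqrt_eq_rpow]
    norm_num
  refine (pow_left_inj₀ (hΓ (by norm_num)).le ?_ two_ne_zero).1 ?_
  · have := hΓ (s := 1 / 3) (by norm_num)
    have := hΓ (s := 1 / 4) (by norm_num)
    positivity
  · rw [sq_Gamma_one_twelfth]
    simp only [mul_pow, div_pow, h2, h3, sq_sqrt pi_pos.le, sq_sqrt (by positivity : 0 ≤ √3 + 1)]
end

section
/- The real Gamma function satisfies Γ(11/20) = 2^(1/5) · √φ · Γ(1/5) · Γ(2/5) · Γ(1/20)⁻¹, where φ = 5 + √5. -/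
open Real

theorem Gamma_mul_Gamma_add_half_mul_Gamma_two_mul_add_half (s : ℝ) :
    Gamma s * Gamma (s + 1 / 2) * Gamma (2 * s + 1 / 2) =
      2 ^ (2 - 6 * s) * π * Gamma (4 * s) := by
  have hpow : (2 : ℝ) ^ (1 - 2 * s) * 2 ^ (1 - 2 * (2 * s)) = 2 ^ (2 - 6 * s) := by
    rw [← rpow_add two_pos]
    ring_nf
  calc
    _ = Gamma (2 * s) * 2 ^ (1 - 2 * s) * √π * Gamma (2 * s + 1 / 2) := by
      rw [Gamma_mul_Gamma_add_half]
    _ = Gamma (2 * s) * Gamma (2 * s + 1 / 2) * 2 ^ (1 - 2 * s) * √π := by ring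
    _ = Gamma (2 * (2 * s)) * 2 ^ (1 - 2 * (2 * s)) * √π * 2 ^ (1 - 2 * s) * √π := by
      rw [Gamma_mul_Gamma_add_half]
    _ = 2 ^ (1 - 2 * s) * 2 ^ (1 - 2 * (2 * s)) * (√π * √π) * Gamma (2 * (2 * s)) := by ring
    _ = 2 ^ (2 - 6 * s) * π * Gamma (4 * s) := by
      rw [hpow, mul_self_sqrt pi_nonneg, show 2 * (2 * s) = 4 * s by ring]

theorem Gamma_mul_Gamma_add_half_eq_mul_Gamma_four_mul_mul_Gamma_half_sub {s : ℝ}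
    (hs : cos (2 * π * s) ≠ 0) :
    Gamma s * Gamma (s + 1 / 2) =
      2 ^ (2 - 6 * s) * cos (2 * π * s) * Gamma (4 * s) * Gamma (1 / 2 - 2 * s) := by
  have reflection : Gamma (2 * s + 1 / 2) * Gamma (1 / 2 - 2 * s) * cos (2 * π * s) = π := by
    rw [add_comm, Gamma_half_add_mul_Gamma_half_sub, show π * (2 * s) = 2 * π * s by ring,
      div_mul_cancel₀ _ hs]
  have hGamma : Gamma (2 * s + 1 / 2) ≠ 0 := by
    intro hzero
    rw [hzero, zero_mul, zero_mul] at reflection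
    exact pi_ne_zero reflection.symm
  apply mul_right_cancel₀ hGamma
  rw [Gamma_mul_Gamma_add_half_mul_Gamma_two_mul_add_half]
  linear_combination -2 ^ (2 - 6 * s) * Gamma (4 * s) * reflection

theorem two_rpow_mul_cos_pi_div_ten :
    (2 : ℝ) ^ (17 / 10 : ℝ) * cos (π / 10) = 2 ^ (1 / 5 : ℝ) * √(5 + √5) := by
  have hpow : (2 : ℝ) ^ (17 / 10 : ℝ) = 2 ^ (1 / 5 : ℝ) * (2 * √2) := by
    rw [sqrt_eq_rpow, ← rpow_one_add' zero_le_two (by norm_num), ← rpow_add two_pos]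
    norm_num
  rw [hpow, cos_pi_div_ten, mul_assoc, mul_div_cancel₀ _ (by positivity)]

theorem gamma_eleven_twentieths :
    Real.Gamma (11/20) =
      (2:ℝ) ^ ((1:ℝ)/5) * Real.sqrt (5 + Real.sqrt 5) *
        Real.Gamma (1/5) * Real.Gamma (2/5) * (Real.Gamma (1/20))⁻¹ := by
  have hcos : cos (2 * π * (1 / 20)) ≠ 0 :=
    (cos_pos_of_mem_Ioo ⟨by linarith [pi_pos], by linarith [pi_pos]⟩).ne'
  have key : Gamma (1 / 20) * Gamma (11 / 20) =
      2 ^ (17 / 10 : ℝ) * cos (π / 10) * Gamma (1 / 5) * Gamma (2 / 5) := by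
    convert Gamma_mul_Gamma_add_half_eq_mul_Gamma_four_mul_mul_Gamma_half_sub hcos using 3 <;>
      ring_nf
  have hGamma : Gamma (1 / 20) ≠ 0 := (Gamma_pos_of_pos (by norm_num)).ne'
  rw [eq_mul_inv_iff_mul_eq₀ hGamma, mul_comm, key, two_rpow_mul_cos_pi_div_ten]
end
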